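/- Let D be an unbounded c-John domain in ℝⁿ, n ≥ 2, with D ≠ ℝⁿ. Let 0 < δ < 1 and 1 ≤ p, q < ∞ be given such that p < n/δ and 0 ≤ 1/p − 1/q ≤ δ/n. Then the fractional (δ,q,p)-Hardy inequality holds in D if either (A) the upper Assouad dimension of ∂D is strictly less than n − δp, or (B) the lower Assouad dimension of ∂D is strictly greater than n − δp and ∂D is unbounded. -/

import Mathlib

open MeasureTheory Metric Set
open scoped ENNReal NNReal BigOperators

noncomputable section

/-- Euclidean `n`-space. -/
abbrev Eucl (n : ℕ) : Type := EuclideanSpace ℝ (Fin n)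

/-- `D` is a `c`-John domain (bounded or unbounded): an open connected set such that each
pair of points can be joined by a rectifiable curve, parametrized by arc length
(formalized as a `1`-Lipschitz parametrization on `[0, ℓ]`), along which
`dist(γ t, ∂D) ≥ min{t, ℓ - t}/c`. -/
def IsJohnDomain (n : ℕ) (c : ℝ) (D : Set (Eucl n)) : Prop :=
  IsOpen D ∧ IsConnected D ∧
    ∀ x₁ ∈ D, ∀ x₂ ∈ D, ∃ ℓ : ℝ, 0 ≤ ℓ ∧ ∃ γ : ℝ → Eucl n,
      γ 0 = x₁ ∧ γ ℓ = x₂ ∧ (∀ t ∈ Icc (0:ℝ) ℓ, γ t ∈ D) ∧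
      LipschitzOnWith 1 γ (Icc 0 ℓ) ∧
      ∀ t ∈ Icc (0:ℝ) ℓ, min t (ℓ - t) / c ≤ infDist (γ t) (frontier D)

/-- The ball `B(x, τ·dist(x, ∂G))`; by convention, if `∂G = ∅` (i.e. `G = ℝⁿ`)
it is all of `ℝⁿ`. -/
def tauBall (n : ℕ) (τ : ℝ) (G : Set (Eucl n)) (x : Eucl n) : Set (Eucl n) :=
  {y : Eucl n | edist x y < ENNReal.ofReal τ * EMetric.infEdist x (frontier G)}

/-- The fractional kernel `|u x - u y|^p / |x - y|^(n + δp)` as an extended real. -/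
def fracKernel (n : ℕ) (δ p : ℝ) (u : Eucl n → ℝ) (x y : Eucl n) : ℝ≥0∞ :=
  ENNReal.ofReal (|u x - u y| ^ p / dist x y ^ ((n : ℝ) + δ * p))

/-- The `p`-th power of the seminorm `|u|_{W^{δ,p}_τ(G)}`. -/
def fracEnergyTau (n : ℕ) (δ τ p : ℝ) (G : Set (Eucl n)) (u : Eucl n → ℝ) : ℝ≥0∞ :=
  ∫⁻ x in G, ∫⁻ y in tauBall n τ G x, fracKernel n δ p u x y ∂volume ∂volume

/-- The `p`-th power of the seminorm `|u|_{W^{δ,p}(G)}`. -/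
def fracEnergy (n : ℕ) (δ p : ℝ) (G : Set (Eucl n)) (u : Eucl n → ℝ) : ℝ≥0∞ :=
  ∫⁻ x in G, ∫⁻ y in G, fracKernel n δ p u x y ∂volume ∂volume

/-- The fractional `(δ,p)`-capacity of a compact set `K ⊆ G`:
`inf |u|_{W^{δ,p}(G)}^p` over `u ∈ C₀(G)` with `u ≥ 1` on `K`. -/
def fracCap (n : ℕ) (δ p : ℝ) (K G : Set (Eucl n)) : ℝ≥0∞ :=
  ⨅ (u : Eucl n → ℝ) (_ : Continuous u) (_ : HasCompactSupport u) (_ : tsupport u ⊆ G)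
    (_ : ∀ x ∈ K, 1 ≤ u x), fracEnergy n δ p G u

/-- The fractional `(δ,q,p)`-Hardy inequality holds in `G` with constant `C`. -/
def HasFracHardy (n : ℕ) (δ p q C : ℝ) (G : Set (Eucl n)) : Prop :=
  ∀ u : Eucl n → ℝ, Continuous u → HasCompactSupport u → tsupport u ⊆ G →
    (∫⁻ x in G, ENNReal.ofReal
        (|u x| ^ q / infDist x (frontier G) ^ (q * (δ + n * (1/q - 1/p)))) ∂volume)
      ≤ ENNReal.ofReal C * fracEnergy n δ p G u ^ (q / p)

/-- The closed axis-parallel cube with center `z` and half side length `r`. -/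
def cube (n : ℕ) (z : Eucl n) (r : ℝ) : Set (Eucl n) :=
  {x : Eucl n | ∀ i, |x i - z i| ≤ r}

/-- The quantity `|Q|^(-1-δ/n) ∫_Q |u - u_Q|` for the cube `Q = cube n z r`. -/
def aTerm (n : ℕ) (δ : ℝ) (u : Eucl n → ℝ) (z : Eucl n) (r : ℝ) : ℝ :=
  ((volume (cube n z r)).toReal) ^ (-(1:ℝ) - δ / n) *
    ∫ x in cube n z r, |u x - ⨍ y in cube n z r, u y ∂volume| ∂volume

/-- The seminorm `|u|_{A^{δ,p}_κ(G)}`: the supremum, over families `𝒬` of pairwise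
disjoint cubes `Q` (given by center-halfside pairs) with `κQ ⊆ G`, of the `L^p(G)`
norm of `∑_{Q ∈ 𝒬} (|Q|^(-1-δ/n) ∫_Q |u - u_Q|) χ_Q`. -/
def ASeminorm (n : ℕ) (κ δ p : ℝ) (G : Set (Eucl n)) (u : Eucl n → ℝ) : ℝ≥0∞ :=
  ⨆ (𝒬 : Set (Eucl n × ℝ)) (_ : ∀ c ∈ 𝒬, 0 < c.2 ∧ cube n c.1 (κ * c.2) ⊆ G)
    (_ : ∀ c ∈ 𝒬, ∀ c' ∈ 𝒬, c ≠ c' → cube n c.1 c.2 ∩ cube n c'.1 c'.2 = ∅),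
    (∫⁻ x in G,
        (∑' c : 𝒬, (cube n (c : Eucl n × ℝ).1 (c : Eucl n × ℝ).2).indicator
          (fun _ => ENNReal.ofReal (aTerm n δ u (c : Eucl n × ℝ).1 (c : Eucl n × ℝ).2)) x) ^ p
      ∂volume) ^ (1 / p)

/-- `Q` is a closed dyadic cube in `ℝⁿ`. -/
def IsDyadicCube (n : ℕ) (Q : Set (Eucl n)) : Prop :=
  ∃ (k : ℤ) (z : Fin n → ℤ),
    Q = {x : Eucl n | ∀ i, (z i : ℝ) * (2:ℝ) ^ k ≤ x i ∧ x i ≤ ((z i : ℝ) + 1) * (2:ℝ) ^ k}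

/-- `W` is a Whitney decomposition of the proper open set `G`: a countable family of
closed dyadic cubes with pairwise disjoint interiors whose union is `G`, with
`diam Q ≤ dist(Q, ∂G) ≤ 4 diam Q` for each cube `Q ∈ W`. -/
def IsWhitneyDecomposition (n : ℕ) (G : Set (Eucl n)) (W : Set (Set (Eucl n))) : Prop :=
  W.Countable ∧ (∀ Q ∈ W, IsDyadicCube n Q) ∧ ⋃₀ W = G ∧
    (W.Pairwise fun Q R => interior Q ∩ interior R = ∅) ∧
    ∀ Q ∈ W, (∀ x ∈ Q, Metric.diam Q ≤ infDist x (frontier G)) ∧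
      ∃ x ∈ Q, infDist x (frontier G) ≤ 4 * Metric.diam Q

/-- `lam` is an upper Assouad-type covering exponent for `E`: there is `C > 0` such
that for every `x ∈ E` and all `0 < r < R < 2 diam E`, the set `E ∩ B(x,R)` can be
covered by at most `C (R/r)^lam` balls centered in `E` of radius `r`. -/
def UpperAssouadBound (n : ℕ) (E : Set (Eucl n)) (lam : ℝ) : Prop :=
  ∃ C : ℝ, 0 < C ∧ ∀ x ∈ E, ∀ r R : ℝ, 0 < r → r < R →
    ENNReal.ofReal R < 2 * EMetric.diam E →
    ∃ F : Finset (Eucl n), ↑F ⊆ E ∧ (F.card : ℝ) ≤ C * (R / r) ^ lam ∧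
      E ∩ ball x R ⊆ ⋃ y ∈ F, ball y r

/-- The upper Assouad dimension of `E`. -/
def upperAssouadDim (n : ℕ) (E : Set (Eucl n)) : ℝ :=
  sInf {lam : ℝ | 0 ≤ lam ∧ UpperAssouadBound n E lam}

/-- `lam` is a lower Assouad-type exponent for `E`: there is `C > 0` such that for
every `x ∈ E` and all `0 < r < R < 2 diam E`, at least `C (R/r)^lam` balls centered
in `E` of radius `r` are needed to cover `E ∩ B(x,R)`. -/
def LowerAssouadBound (n : ℕ) (E : Set (Eucl n)) (lam : ℝ) : Prop :=
  ∃ C : ℝ, 0 < C ∧ ∀ x ∈ E, ∀ r R : ℝ, 0 < r → r < R →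
    ENNReal.ofReal R < 2 * EMetric.diam E →
    ∀ F : Finset (Eucl n), ↑F ⊆ E → (E ∩ ball x R ⊆ ⋃ y ∈ F, ball y r) →
      C * (R / r) ^ lam ≤ (F.card : ℝ)

/-- The lower Assouad dimension of `E`. -/
def lowerAssouadDim (n : ℕ) (E : Set (Eucl n)) : ℝ :=
  sSup {lam : ℝ | 0 ≤ lam ∧ LowerAssouadBound n E lam}

end

/-!
Write `d` for the distance to `∂D`. For `q = p`, compare `u x` with the values of `u` on a set of
points whose boundary distance is about `M * d x` (thin boundary) or `d x / M` (thick boundary),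
at a distance from `x` where the energy controls the differences. The John condition supplies balls
of such points. Interchanging the integrals, each `y` is charged for the points `x` that refer to
it, and the Assouad bound makes the total charge a small multiple of the Hardy integral of `u` once
`M` is large; that integral is finite, so it can be absorbed.

At the other endpoint `1/p - 1/q = δ/n` there is no weight. If the ball `B(x, r)` lies in `D` and
has twice the measure of the set where `|u| ≥ |u x| / 2`, half of it contributes to the energy at
`x`; otherwise `r > d x` and the Hardy integrand at `x` takes over. Taking the radius from
Chebyshev's inequality bounds `∫ |u|^q` by a power of itself below one times the energy. The
remaining `q` follow by Hölder's inequality.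
-/

section Packing

lemma exists_finset_separated_cover {X : Type*} [PseudoMetricSpace X] {T : Set X}
    (hT : TotallyBounded T) {r : ℝ} (hr : 0 < r) :
    ∃ F : Finset X, ↑F ⊆ T ∧ (F : Set X).Pairwise (fun y z => r / 2 < dist y z) ∧
      T ⊆ ⋃ y ∈ F, ball y r := by
  lift r to ℝ≥0 using hr.le
  replace hr : 0 < r := NNReal.coe_pos.1 hr
  have hr4 : r / 4 ≠ 0 := by positivity
  obtain ⟨N, -, hNfin, hNcover⟩ := exists_finite_isCover_of_totallyBounded hr4 hT
  have hpack : packingNumber (r / 2) T ≠ ⊤ := by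
    have hle := (packingNumber_two_mul_le_externalCoveringNumber (r / 4) T).trans
      (hNcover.externalCoveringNumber_le_encard)
    rw [show 2 * (r / 4) = r / 2 by ring] at hle
    exact (hle.trans_lt hNfin.encard_lt_top).ne
  have hfin : (maximalSeparatedSet (r / 2) T).Finite := by
    rw [← Set.encard_ne_top_iff, encard_maximalSeparatedSet hpack]
    exact hpack
  refine ⟨hfin.toFinset, by simpa using maximalSeparatedSet_subset, fun y hy z hz hyz => ?_,
    fun x hx => ?_⟩
  · have hsep : ((r / 2 : ℝ≥0) : ℝ≥0∞) < edist y z :=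
      isSeparated_maximalSeparatedSet (by simpa using hy) (by simpa using hz) hyz
    rw [edist_nndist, ENNReal.coe_lt_coe] at hsep
    exact_mod_cast hsep
  · obtain ⟨y, hy, hxy⟩ := isCover_maximalSeparatedSet hpack hx
    simp only [Set.Finite.mem_toFinset, mem_iUnion, mem_ball]
    refine ⟨y, hy, lt_of_le_of_lt ?_ (half_lt_self hr)⟩
    change edist x y ≤ _ at hxy
    rw [edist_nndist, ENNReal.coe_le_coe] at hxy
    exact_mod_cast hxy

lemma card_le_of_pairwise_le_dist {E : Type*} [NormedAddCommGroup E] [NormedSpace ℝ E]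
    [FiniteDimensional ℝ E] {F : Finset E} {w : E} {s R : ℝ} (hs : 0 < s) (hR : 0 < R)
    (hF : ↑F ⊆ ball w R) (hsep : (F : Set E).Pairwise fun y z => s ≤ dist y z) :
    (F.card : ℝ) ≤ (2 * R / s + 1) ^ Module.finrank ℝ E := by
  borelize E
  set μ : Measure E := Measure.addHaar
  have hdisj : (F : Set E).PairwiseDisjoint fun y => ball y (s / 2) := fun y hy z hz hyz =>
    ball_disjoint_ball (by linarith [hsep hy hz hyz])
  have hsub : ⋃ y ∈ F, ball y (s / 2) ⊆ ball w (R + s / 2) :=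
    iUnion₂_subset fun y hy => ball_subset_ball' (by linarith [mem_ball.1 (hF hy)])
  have hvol : (F.card : ℝ≥0∞) * ENNReal.ofReal ((s / 2) ^ Module.finrank ℝ E) * μ (ball 0 1) ≤
      ENNReal.ofReal ((R + s / 2) ^ Module.finrank ℝ E) * μ (ball 0 1) :=
    calc _ = μ (⋃ y ∈ F, ball y (s / 2)) := by
          rw [measure_biUnion_finset hdisj fun _ _ => measurableSet_ball]
          simp only [μ.addHaar_ball_of_pos _ (half_pos hs), Finset.sum_const, nsmul_eq_mul,
            mul_assoc]
      _ ≤ μ (ball w (R + s / 2)) := measure_mono hsub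
      _ = _ := μ.addHaar_ball_of_pos _ (by positivity)
  have hcard := (ENNReal.mul_le_mul_iff_left (measure_ball_pos μ (0 : E) one_pos).ne'
    measure_ball_lt_top.ne).1 hvol
  rw [← ENNReal.ofReal_natCast, ← ENNReal.ofReal_mul (by positivity),
    ENNReal.ofReal_le_ofReal_iff (by positivity), ← le_div_iff₀ (by positivity),
    ← div_pow] at hcard
  rwa [show 2 * R / s + 1 = (R + s / 2) / (s / 2) by field_simp]

end Packing

section AssouadDimension

variable {n : ℕ} {E : Set (Eucl n)} {lam s : ℝ}

lemma upperAssouadBound_natCast (n : ℕ) (E : Set (Eucl n)) : UpperAssouadBound n E n := by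
  refine ⟨5 ^ n, by positivity, fun x _ r R hr hrR _ => ?_⟩
  have hR : 0 < R := hr.trans hrR
  have hbounded : TotallyBounded (E ∩ ball x R) :=
    (isCompact_closedBall x R).totallyBounded.subset
      (inter_subset_right.trans ball_subset_closedBall)
  obtain ⟨F, hFE, hsep, hcover⟩ := exists_finset_separated_cover hbounded hr
  refine ⟨F, fun y hy => (hFE hy).1, ?_, hcover⟩
  have hcard := card_le_of_pairwise_le_dist (half_pos hr) hR (fun y hy => (hFE hy).2)
    (hsep.imp fun _ _ h => h.le)
  have hratio : 2 * R / (r / 2) + 1 ≤ 5 * (R / r) := by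
    have h1 : 1 ≤ R / r := (one_le_div hr).2 hrR.le
    calc 2 * R / (r / 2) + 1 = 4 * (R / r) + 1 := by ring
      _ ≤ 5 * (R / r) := by linarith
  rw [finrank_euclideanSpace_fin] at hcard
  rw [Real.rpow_natCast, ← mul_pow]
  exact hcard.trans (by gcongr)

lemma exists_upperAssouadBound_of_upperAssouadDim_lt (h : upperAssouadDim n E < s) :
    ∃ lam, 0 ≤ lam ∧ lam < s ∧ UpperAssouadBound n E lam := by
  have hne : {lam : ℝ | 0 ≤ lam ∧ UpperAssouadBound n E lam}.Nonempty :=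
    ⟨n, n.cast_nonneg, upperAssouadBound_natCast n E⟩
  obtain ⟨lam, ⟨h0, hlam⟩, hlt⟩ := exists_lt_of_csInf_lt hne h
  exact ⟨lam, h0, hlt, hlam⟩

lemma exists_lowerAssouadBound_of_lt_lowerAssouadDim (hs : 0 ≤ s) (h : s < lowerAssouadDim n E) :
    ∃ lam, s < lam ∧ LowerAssouadBound n E lam := by
  have hne : {lam : ℝ | 0 ≤ lam ∧ LowerAssouadBound n E lam}.Nonempty := by
    by_contra hempty
    rw [lowerAssouadDim, not_nonempty_iff_eq_empty.1 hempty, Real.sSup_empty] at h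
    exact hs.not_gt h
  obtain ⟨lam, ⟨-, hlam⟩, hlt⟩ := exists_lt_of_lt_csSup hne h
  exact ⟨lam, hlt, hlam⟩

/-- The covering condition of `UpperAssouadBound` with constant `C`, imposed at all scales
`0 < r < R` and without requiring the balls to be centered in `E`. -/
def HasCoversAtAllScales {X : Type*} [PseudoMetricSpace X] (C lam : ℝ) (E : Set X) : Prop :=
  ∀ x ∈ E, ∀ r R : ℝ, 0 < r → r < R →
    ∃ F : Finset X, (F.card : ℝ) ≤ C * (R / r) ^ lam ∧ E ∩ ball x R ⊆ ⋃ y ∈ F, ball y r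

/-- The packing counterpart of `HasCoversAtAllScales`: every `E ∩ B(x, R)` with `x ∈ E` contains
at least `C (R/r)^lam` points that are `r / 2`-separated. -/
def HasSeparatedSetsAtAllScales {X : Type*} [PseudoMetricSpace X] (C lam : ℝ) (E : Set X) : Prop :=
  ∀ x ∈ E, ∀ r R : ℝ, 0 < r → r < R →
    ∃ F : Finset X, ↑F ⊆ E ∩ ball x R ∧ (F : Set X).Pairwise (fun y z => r / 2 < dist y z) ∧
      C * (R / r) ^ lam ≤ F.card

lemma UpperAssouadBound.exists_hasCoversAtAllScales (hlam : 0 ≤ lam)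
    (h : UpperAssouadBound n E lam) : ∃ C, HasCoversAtAllScales C lam E := by
  obtain ⟨C, hC, h⟩ := h
  refine ⟨max C 1, fun x hx r R hr hrR => ?_⟩
  have hR : 0 < R := hr.trans hrR
  by_cases hsmall : ENNReal.ofReal R < 2 * ediam E
  · obtain ⟨F, -, hcard, hcover⟩ := h x hx r R hr hrR hsmall
    exact ⟨F, hcard.trans (by gcongr; exact le_max_left _ _), hcover⟩
  have hE : Bornology.IsBounded E := by
    rw [isBounded_iff_ediam_ne_top]
    intro htop
    simp [htop] at hsmall
  have hscale : ∀ R', 0 < R' → R' < 2 * diam E → ENNReal.ofReal R' < 2 * ediam E := by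
    intro R' hR' hlt
    calc ENNReal.ofReal R' < ENNReal.ofReal (2 * diam E) :=
          (ENNReal.ofReal_lt_ofReal_iff (hR'.trans hlt)).2 hlt
      _ = 2 * ediam E := by
          rw [ENNReal.ofReal_mul zero_le_two, ENNReal.ofReal_ofNat, Metric.diam,
            ENNReal.ofReal_toReal (isBounded_iff_ediam_ne_top.1 hE)]
  have hdiam : 2 * diam E ≤ R := not_lt.1 fun hlt => hsmall (hscale R hR hlt)
  rcases lt_or_ge (diam E) r with hr' | hr'
  · refine ⟨{x}, ?_, fun y hy => ?_⟩
    · have hone : 1 ≤ (R / r) ^ lam := Real.one_le_rpow ((one_le_div hr).2 hrR.le) hlam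
      simpa using one_le_mul_of_one_le_of_one_le (le_max_right C 1) hone
    · simpa using (dist_le_diam_of_mem hE hy.1 hx).trans_lt hr'
  · obtain ⟨F, -, hcard, hcover⟩ := h x hx r (3 / 2 * diam E) hr (by linarith)
      (hscale _ (by linarith) (by linarith))
    refine ⟨F, hcard.trans ?_, fun y hy => hcover ⟨hy.1, ?_⟩⟩
    · have : 0 < diam E := hr.trans_le hr'
      gcongr
      · exact le_max_left _ _
      · linarith
    · rw [mem_ball]
      linarith [dist_le_diam_of_mem hE hy.1 hx]

lemma LowerAssouadBound.exists_hasSeparatedSetsAtAllScales (h : LowerAssouadBound n E lam)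
    (hE : ¬ Bornology.IsBounded E) :
    ∃ C : ℝ, 0 < C ∧ HasSeparatedSetsAtAllScales C lam E := by
  obtain ⟨C, hC, h⟩ := h
  refine ⟨C, hC, fun x hx r R hr hrR => ?_⟩
  have hbounded : TotallyBounded (E ∩ ball x R) :=
    (isCompact_closedBall x R).totallyBounded.subset
      (inter_subset_right.trans ball_subset_closedBall)
  obtain ⟨F, hFE, hsep, hcover⟩ := exists_finset_separated_cover hbounded hr
  have hscale : ENNReal.ofReal R < 2 * ediam E := by
    rw [not_ne_iff.1 (isBounded_iff_ediam_ne_top.not.1 hE)]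
    simp
  exact ⟨F, hFE, hsep, h x hx r R hr hrR hscale F (fun y hy => (hFE hy).1) hcover⟩

end AssouadDimension

section Boundary

variable {X : Type*} [PseudoMetricSpace X] {D : Set X} {x y : X} {r : ℝ}

lemma infDist_frontier_pos (hO : IsOpen D) (hF : (frontier D).Nonempty) (hx : x ∈ D) :
    0 < infDist x (frontier D) :=
  (isClosed_frontier.notMem_iff_infDist_pos hF).1
    (disjoint_right.1 (disjoint_frontier_iff_isOpen.2 hO) hx)

lemma le_infDist_frontier_of_mem_ball (hO : IsOpen D) (hF : (frontier D).Nonempty)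
    (hball : ball y (2 * r) ⊆ D) (hx : x ∈ ball y r) : r ≤ infDist x (frontier D) := by
  refine (le_infDist hF).2 fun z hz => not_lt.1 fun hlt => ?_
  refine disjoint_left.1 (disjoint_frontier_iff_isOpen.2 hO) hz (hball ?_)
  rw [mem_ball] at hx ⊢
  linarith [dist_triangle z x y, dist_comm z x]

lemma ball_infDist_frontier_subset {E : Type*} [NormedAddCommGroup E] [NormedSpace ℝ E]
    [FiniteDimensional ℝ E] {D : Set E} {x : E} (hx : x ∈ D) :
    ball x (infDist x (frontier D)) ⊆ D := by
  rcases eq_or_ne D univ with rfl | hD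
  · exact subset_univ _
  obtain ⟨w, hw, hxw⟩ := exists_mem_frontier_infDist_compl_eq_dist hx hD
  exact (ball_subset_ball (hxw ▸ infDist_le_dist_of_mem hw)).trans ball_infDist_compl_subset

/-- The interior corkscrew condition with ratio `κ`, at all locations and all scales: every ball
`B(x, R)` centered in `D` contains a ball of radius `κR` that lies in `D`. There is no upper bound
on `R`, so for `κ > 0` the condition also makes `D` large at infinity. -/
def HasCorkscrews (κ : ℝ) (D : Set X) : Prop :=
  ∀ x ∈ D, ∀ R : ℝ, 0 < R → ∃ y, ball y (κ * R) ⊆ D ∩ ball x R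

lemma HasCorkscrews.exists_ball_subset_of_mem_closure {κ : ℝ} (h : HasCorkscrews κ D)
    (hx : x ∈ closure D) {R : ℝ} (hR : 0 < R) :
    ∃ y, ball y (κ * (R / 2)) ⊆ D ∩ ball x R := by
  obtain ⟨x', hx', hxx'⟩ := Metric.mem_closure_iff.1 hx (R / 2) (half_pos hR)
  obtain ⟨y, hy⟩ := h x' hx' (R / 2) (half_pos hR)
  refine ⟨y, hy.trans (inter_subset_inter_right D (ball_subset_ball' ?_))⟩
  linarith [dist_comm x x']

/-- Walk along a John curve from `x` towards a very distant point: at arc length `R / 2` the curve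
is at distance at least `R / (2 * c)` from the boundary. -/
lemma IsJohnDomain.hasCorkscrews {n : ℕ} {c : ℝ} {D : Set (Eucl n)} (hD : IsJohnDomain n c D)
    (hc : 1 ≤ c) (hDu : ¬ Bornology.IsBounded D) : HasCorkscrews (1 / (2 * c)) D := by
  intro x hx R hR
  obtain ⟨x', hx', hfar⟩ : ∃ x' ∈ D, R < dist x' x := by
    by_contra! h
    exact hDu (isBounded_closedBall.subset h)
  obtain ⟨ℓ, hℓ, γ, hγ0, hγℓ, hγD, hlip, hγdist⟩ := hD.2.2 x hx x' hx'
  have hlip' : ∀ t ∈ Icc 0 ℓ, dist (γ t) x ≤ t := by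
    intro t ht
    simpa [hγ0, Real.dist_eq, abs_of_nonneg ht.1] using hlip.dist_le_mul t ht 0 ⟨le_rfl, hℓ⟩
  have hRℓ : R < ℓ := hfar.trans_le (hγℓ ▸ hlip' ℓ ⟨hℓ, le_rfl⟩)
  have hmem : R / 2 ∈ Icc 0 ℓ := ⟨by positivity, by linarith⟩
  have hinner : 1 / (2 * c) * R ≤ infDist (γ (R / 2)) (frontier D) := by
    have := hγdist (R / 2) hmem
    rw [min_eq_left (by linarith)] at this
    exact le_of_eq_of_le (by field_simp) this
  have hhalf : 1 / (2 * c) * R ≤ R / 2 := by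
    rw [one_div_mul_eq_div]
    gcongr
    linarith
  refine ⟨γ (R / 2), subset_inter ?_ (ball_subset_ball' ?_)⟩
  · exact (ball_subset_ball hinner).trans (ball_infDist_frontier_subset (hγD _ hmem))
  · linarith [hlip' _ hmem]

end Boundary

section Volume

/-- The volume of the unit ball of `Eucl n`, as a real number. -/
noncomputable def unitBallVolume (n : ℕ) : ℝ := volume.real (ball (0 : Eucl n) 1)

lemma unitBallVolume_pos (n : ℕ) : 0 < unitBallVolume n :=
  ENNReal.toReal_pos (measure_ball_pos _ _ one_pos).ne' measure_ball_lt_top.ne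

lemma volume_ball_eq_ofReal {n : ℕ} (x : Eucl n) {r : ℝ} (hr : 0 < r) :
    volume (ball x r) = ENNReal.ofReal (unitBallVolume n * r ^ n) := by
  rw [Measure.addHaar_ball_of_pos _ _ hr, finrank_euclideanSpace_fin, mul_comm (unitBallVolume n),
    ENNReal.ofReal_mul (by positivity), unitBallVolume, ofReal_measureReal]

variable {n : ℕ} {ι : Type*} {s : ℝ}

lemma volume_biUnion_ball_le (F : Finset ι) (c : ι → Eucl n) (hs : 0 < s) :
    volume (⋃ i ∈ F, ball (c i) s) ≤ ENNReal.ofReal (F.card * (unitBallVolume n * s ^ n)) := by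
  refine (measure_biUnion_finset_le _ _).trans_eq ?_
  simp only [volume_ball_eq_ofReal _ hs, Finset.sum_const, nsmul_eq_mul]
  rw [ENNReal.ofReal_mul F.card.cast_nonneg, ENNReal.ofReal_natCast]

lemma volume_biUnion_ball {F : Finset ι} {c : ι → Eucl n} (hs : 0 < s)
    (hdisj : (F : Set ι).PairwiseDisjoint fun i => ball (c i) s) :
    volume (⋃ i ∈ F, ball (c i) s) = ENNReal.ofReal (F.card * (unitBallVolume n * s ^ n)) := by
  rw [measure_biUnion_finset hdisj fun _ _ => measurableSet_ball]
  simp only [volume_ball_eq_ofReal _ hs, Finset.sum_const, nsmul_eq_mul]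
  rw [ENNReal.ofReal_mul F.card.cast_nonneg, ENNReal.ofReal_natCast]

end Volume

section TestFunctions

/-- The class `C₀(D)` of continuous functions whose compact support is contained in `D`. -/
structure IsC0 {X : Type*} [TopologicalSpace X] (D : Set X) (u : X → ℝ) : Prop where
  continuous : Continuous u
  hasCompactSupport : HasCompactSupport u
  tsupport_subset : tsupport u ⊆ D

variable {X : Type*} [PseudoMetricSpace X] [MeasureSpace X] {D : Set X} {u : X → ℝ} {q s : ℝ}

/-- The integral `∫_D |u|^q / dist(·, ∂D)^s`. -/
noncomputable def weightedIntegral (D : Set X) (u : X → ℝ) (q s : ℝ) : ℝ≥0∞ :=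
  ∫⁻ x in D, ENNReal.ofReal (|u x| ^ q / infDist x (frontier D) ^ s)

lemma measurable_abs_rpow_div_infDist_rpow [OpensMeasurableSpace X] (D : Set X)
    (hu : Measurable u) (q s : ℝ) :
    Measurable fun x => ENNReal.ofReal (|u x| ^ q / infDist x (frontier D) ^ s) :=
  ((hu.abs.pow_const q).div ((continuous_infDist_pt _).measurable.pow_const s)).ennreal_ofReal

lemma weightedIntegral_lt_top [OpensMeasurableSpace X]
    [IsFiniteMeasureOnCompacts (volume : Measure X)] (hO : IsOpen D) (hF : (frontier D).Nonempty)
    (hu : IsC0 D u) (hq : 0 < q) : weightedIntegral D u q s < ⊤ := by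
  have hd : ∀ x ∈ tsupport u, 0 < infDist x (frontier D) := fun x hx =>
    infDist_frontier_pos hO hF (hu.tsupport_subset hx)
  have hcont : ContinuousOn (fun x => |u x| ^ q / infDist x (frontier D) ^ s) (tsupport u) :=
    ((hu.continuous.abs.rpow_const fun _ => Or.inr hq.le).continuousOn).div
      ((continuous_infDist_pt _).continuousOn.rpow_const fun x hx => Or.inl (hd x hx).ne')
      fun x hx => (Real.rpow_pos_of_pos (hd x hx) s).ne'
  obtain ⟨B, hB⟩ := hu.hasCompactSupport.isCompact.exists_bound_of_continuousOn hcont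
  calc weightedIntegral D u q s ≤ ∫⁻ x, (tsupport u).indicator (fun _ => ENNReal.ofReal B) x := by
        refine (setLIntegral_le_lintegral _ _).trans (lintegral_mono fun x => ?_)
        by_cases hx : x ∈ tsupport u
        · rw [indicator_of_mem hx]
          exact ENNReal.ofReal_le_ofReal ((le_abs_self _).trans (hB x hx))
        · simp [image_eq_zero_of_notMem_tsupport hx, Real.zero_rpow hq.ne']
    _ = ENNReal.ofReal B * volume (tsupport u) :=
        lintegral_indicator_const (isClosed_tsupport u).measurableSet _
    _ < ⊤ := ENNReal.mul_lt_top ENNReal.ofReal_lt_top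
        hu.hasCompactSupport.isCompact.measure_lt_top

lemma weightedIntegral_convexCombination_le [OpensMeasurableSpace X] (hO : IsOpen D)
    (hF : (frontier D).Nonempty) (hu : Measurable u) {q₀ q₁ s₀ s₁ τ σ : ℝ} (hq₀ : 0 < q₀)
    (hq₁ : 0 < q₁) (hτ : 0 ≤ τ) (hσ : 0 ≤ σ) (hτσ : τ + σ = 1) :
    weightedIntegral D u (τ * q₀ + σ * q₁) (τ * s₀ + σ * s₁) ≤
      weightedIntegral D u q₀ s₀ ^ τ * weightedIntegral D u q₁ s₁ ^ σ := by
  refine le_of_eq_of_le ?_ (ENNReal.lintegral_mul_norm_pow_le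
    (measurable_abs_rpow_div_infDist_rpow D hu q₀ s₀).aemeasurable
    (measurable_abs_rpow_div_infDist_rpow D hu q₁ s₁).aemeasurable hτ hσ hτσ)
  refine setLIntegral_congr_fun hO.measurableSet fun x hx => ?_
  have hd := infDist_frontier_pos hO hF hx
  have hq : 0 < τ * q₀ + σ * q₁ := convex_Ioi (0 : ℝ) hq₀ hq₁ hτ hσ hτσ
  rw [ENNReal.ofReal_rpow_of_nonneg (by positivity) hτ,
    ENNReal.ofReal_rpow_of_nonneg (by positivity) hσ, ← ENNReal.ofReal_mul (by positivity),
    Real.div_rpow (by positivity) (by positivity), Real.div_rpow (by positivity) (by positivity),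
    div_mul_div_comm, ← Real.rpow_mul (abs_nonneg _), ← Real.rpow_mul (abs_nonneg _),
    ← Real.rpow_mul hd.le, ← Real.rpow_mul hd.le, ← Real.rpow_add hd, mul_comm q₀, mul_comm q₁,
    mul_comm s₀, mul_comm s₁, Real.rpow_add' (abs_nonneg _) hq.ne']

end TestFunctions

section HardyInequality

variable {n : ℕ} {δ p q C : ℝ} {D : Set (Eucl n)}

lemma hasFracHardy_iff (hq : q ≠ 0) : HasFracHardy n δ p q C D ↔ ∀ u, IsC0 D u →
    weightedIntegral D u q (q * (δ - n / p) + n) ≤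
      ENNReal.ofReal C * fracEnergy n δ p D u ^ (q / p) := by
  have hexp : q * (δ + n * (1 / q - 1 / p)) = q * (δ - n / p) + n := by
    field_simp
    ring
  simp only [HasFracHardy, hexp]
  exact ⟨fun h u hu => h u hu.1 hu.2 hu.3, fun h u h1 h2 h3 => h u ⟨h1, h2, h3⟩⟩

/-- The exponents of both sides of the Hardy inequality are affine in `q`, so Hölder's inequality
interpolates between two of them. -/
lemma HasFracHardy.interpolate (hO : IsOpen D) (hF : (frontier D).Nonempty)
    {q₀ q₁ C₀ C₁ τ σ : ℝ} (hp : 0 < p) (hq₀ : 0 < q₀) (hq₁ : 0 < q₁) (hC₀ : 0 < C₀) (hC₁ : 0 < C₁)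
    (hτ : 0 ≤ τ) (hσ : 0 ≤ σ) (hτσ : τ + σ = 1) (h₀ : HasFracHardy n δ p q₀ C₀ D)
    (h₁ : HasFracHardy n δ p q₁ C₁ D) :
    HasFracHardy n δ p (τ * q₀ + σ * q₁) (C₀ ^ τ * C₁ ^ σ) D := by
  have hq : 0 < τ * q₀ + σ * q₁ := convex_Ioi (0 : ℝ) hq₀ hq₁ hτ hσ hτσ
  rw [hasFracHardy_iff hq₀.ne'] at h₀
  rw [hasFracHardy_iff hq₁.ne'] at h₁
  rw [hasFracHardy_iff hq.ne']
  intro u hu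
  have hexp : (τ * q₀ + σ * q₁) * (δ - n / p) + n =
      τ * (q₀ * (δ - n / p) + n) + σ * (q₁ * (δ - n / p) + n) := by
    linear_combination -(n : ℝ) * hτσ
  calc weightedIntegral D u (τ * q₀ + σ * q₁) ((τ * q₀ + σ * q₁) * (δ - n / p) + n)
      ≤ weightedIntegral D u q₀ (q₀ * (δ - n / p) + n) ^ τ *
          weightedIntegral D u q₁ (q₁ * (δ - n / p) + n) ^ σ := by
        rw [hexp]
        exact weightedIntegral_convexCombination_le hO hF hu.continuous.measurable hq₀ hq₁ hτ hσ hτσ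
    _ ≤ (ENNReal.ofReal C₀ * fracEnergy n δ p D u ^ (q₀ / p)) ^ τ *
          (ENNReal.ofReal C₁ * fracEnergy n δ p D u ^ (q₁ / p)) ^ σ := by
        gcongr
        exacts [h₀ u hu, h₁ u hu]
    _ = ENNReal.ofReal (C₀ ^ τ * C₁ ^ σ) * fracEnergy n δ p D u ^ ((τ * q₀ + σ * q₁) / p) := by
        rw [ENNReal.mul_rpow_of_nonneg _ _ hτ, ENNReal.mul_rpow_of_nonneg _ _ hσ, mul_mul_mul_comm,
          ENNReal.ofReal_rpow_of_pos hC₀, ENNReal.ofReal_rpow_of_pos hC₁,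
          ← ENNReal.ofReal_mul (by positivity), ← ENNReal.rpow_mul, ← ENNReal.rpow_mul,
          ← ENNReal.rpow_add_of_nonneg _ _ (by positivity) (by positivity)]
        congr 2
        ring

end HardyInequality

section Kernel

variable {n : ℕ} {δ p : ℝ} {u : Eucl n → ℝ}

lemma measurable_fracKernel (hu : Measurable u) :
    Measurable fun z : Eucl n × Eucl n => fracKernel n δ p u z.1 z.2 :=
  ((((hu.comp measurable_fst).sub (hu.comp measurable_snd)).abs.pow_const p).div
    ((measurable_fst.dist measurable_snd).pow_const _)).ennreal_ofReal

lemma abs_rpow_le_two_rpow_mul_add {p : ℝ} (hp : 0 ≤ p) (a b : ℝ) :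
    |a| ^ p ≤ 2 ^ p * (|b| ^ p + |a - b| ^ p) := by
  have htri : |a| ≤ 2 * max |b| |a - b| := by
    linarith [abs_sub_abs_le_abs_sub a b, le_max_left |b| |a - b|, le_max_right |b| |a - b|]
  have hmax : max |b| |a - b| ^ p ≤ |b| ^ p + |a - b| ^ p := by
    rcases max_choice |b| |a - b| with h | h <;> rw [h]
    · linarith [Real.rpow_nonneg (abs_nonneg (a - b)) p]
    · linarith [Real.rpow_nonneg (abs_nonneg b) p]
  calc |a| ^ p ≤ (2 * max |b| |a - b|) ^ p := by gcongr
    _ = 2 ^ p * max |b| |a - b| ^ p := Real.mul_rpow zero_le_two (by positivity)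
    _ ≤ 2 ^ p * (|b| ^ p + |a - b| ^ p) := by gcongr

lemma ofReal_abs_sub_rpow_div_le_mul_fracKernel (hp : 0 < p) (he : 0 ≤ (n : ℝ) + δ * p)
    {x y : Eucl n} {L d : ℝ} (hd : 0 < d) (hxy : dist x y ≤ L * d) :
    ENNReal.ofReal (|u x - u y| ^ p / d ^ ((n : ℝ) + δ * p)) ≤
      ENNReal.ofReal (L ^ ((n : ℝ) + δ * p)) * fracKernel n δ p u x y := by
  rcases eq_or_ne x y with rfl | hne
  · simp [Real.zero_rpow hp.ne']
  have hdist : 0 < dist x y := dist_pos.2 hne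
  have hL : 0 < L := pos_of_mul_pos_left (hdist.trans_le hxy) hd.le
  rw [fracKernel, ← ENNReal.ofReal_mul (by positivity), ← mul_div_assoc]
  refine ENNReal.ofReal_le_ofReal ?_
  rw [div_le_div_iff₀ (by positivity) (by positivity)]
  calc |u x - u y| ^ p * dist x y ^ ((n : ℝ) + δ * p)
      ≤ |u x - u y| ^ p * (L * d) ^ ((n : ℝ) + δ * p) := by gcongr
    _ = L ^ ((n : ℝ) + δ * p) * |u x - u y| ^ p * d ^ ((n : ℝ) + δ * p) := by
        rw [Real.mul_rpow hL.le hd.le]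
        ring

lemma ofReal_abs_rpow_div_le_add_fracKernel (hp : 0 < p) (he : 0 ≤ (n : ℝ) + δ * p)
    {x y : Eucl n} {L d : ℝ} (hd : 0 < d) (hxy : dist x y ≤ L * d) :
    ENNReal.ofReal (|u x| ^ p / d ^ ((n : ℝ) + δ * p)) ≤
      ENNReal.ofReal (2 ^ p) * (ENNReal.ofReal (|u y| ^ p / d ^ ((n : ℝ) + δ * p)) +
        ENNReal.ofReal (L ^ ((n : ℝ) + δ * p)) * fracKernel n δ p u x y) := by
  calc ENNReal.ofReal (|u x| ^ p / d ^ ((n : ℝ) + δ * p))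
      ≤ ENNReal.ofReal (2 ^ p * (|u y| ^ p / d ^ ((n : ℝ) + δ * p) +
          |u x - u y| ^ p / d ^ ((n : ℝ) + δ * p))) := by
        rw [← add_div, ← mul_div_assoc]
        gcongr
        exact abs_rpow_le_two_rpow_mul_add hp.le _ _
    _ = ENNReal.ofReal (2 ^ p) * (ENNReal.ofReal (|u y| ^ p / d ^ ((n : ℝ) + δ * p)) +
          ENNReal.ofReal (|u x - u y| ^ p / d ^ ((n : ℝ) + δ * p))) := by
        rw [ENNReal.ofReal_mul (by positivity), ENNReal.ofReal_add (by positivity) (by positivity)]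
    _ ≤ _ := by
        gcongr
        exact ofReal_abs_sub_rpow_div_le_mul_fracKernel hp he hd hxy

end Kernel

section Averaging

variable {n : ℕ} {δ p m V a L : ℝ} {D : Set (Eucl n)} {r : Eucl n → Eucl n → Prop}
  {u : Eucl n → ℝ}

/-- A relation `r x y` prescribing the points `y` of `D` over which `u` is averaged in order to
estimate `u x`. Up to a factor `L` the points lie as close to `x` as the boundary does, and their
own boundary distance is at most `1 / a` times that of `x`. With `d` the distance to `∂D`, each `x`
sees a set of measure at least `m * d x ^ n`, and each `y` is seen from a set of measure at most
`V * d y ^ n`. -/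
structure IsAveragingRelation (D : Set (Eucl n)) (m V a L : ℝ) (r : Eucl n → Eucl n → Prop) :
    Prop where
  measurableSet : MeasurableSet {z : Eucl n × Eucl n | r z.1 z.2}
  left_mem : ∀ {x y}, r x y → x ∈ D
  right_mem : ∀ {x y}, r x y → y ∈ D
  dist_le : ∀ {x y}, r x y → dist x y ≤ L * infDist x (frontier D)
  infDist_le : ∀ {x y}, r x y → a * infDist y (frontier D) ≤ infDist x (frontier D)
  le_volume : ∀ x ∈ D, ENNReal.ofReal (m * infDist x (frontier D) ^ n) ≤ volume {y | r x y}
  volume_le : ∀ y ∈ D, volume {x | r x y} ≤ ENNReal.ofReal (V * infDist y (frontier D) ^ n)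

namespace IsAveragingRelation

lemma mul_abs_rpow_div_le (hr : IsAveragingRelation D m V a L r) (hO : IsOpen D)
    (hF : (frontier D).Nonempty) (hδ : 0 ≤ δ) (hp : 0 < p) (hm : 0 ≤ m) (hu : Measurable u)
    {x : Eucl n} (hx : x ∈ D) :
    ENNReal.ofReal m * ENNReal.ofReal (|u x| ^ p / infDist x (frontier D) ^ (δ * p)) ≤
      ENNReal.ofReal (2 ^ p) *
        ((∫⁻ y in {y | r x y},
            ENNReal.ofReal (|u y| ^ p / infDist x (frontier D) ^ ((n : ℝ) + δ * p))) +
          ENNReal.ofReal (L ^ ((n : ℝ) + δ * p)) * ∫⁻ y in D, fracKernel n δ p u x y) := by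
  set d := infDist x (frontier D)
  have hd : 0 < d := infDist_frontier_pos hO hF hx
  have hmeas : MeasurableSet {y | r x y} := measurable_prodMk_left hr.measurableSet
  calc ENNReal.ofReal m * ENNReal.ofReal (|u x| ^ p / d ^ (δ * p))
      = ENNReal.ofReal (|u x| ^ p / d ^ ((n : ℝ) + δ * p)) * ENNReal.ofReal (m * d ^ n) := by
        rw [← ENNReal.ofReal_mul hm, ← ENNReal.ofReal_mul (by positivity), Real.rpow_add hd,
          Real.rpow_natCast]
        congr 1
        field_simp
    _ ≤ ENNReal.ofReal (|u x| ^ p / d ^ ((n : ℝ) + δ * p)) * volume {y | r x y} := by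
        gcongr
        exact hr.le_volume x hx
    _ = ∫⁻ _ in {y | r x y}, ENNReal.ofReal (|u x| ^ p / d ^ ((n : ℝ) + δ * p)) :=
        (setLIntegral_const _ _).symm
    _ ≤ ∫⁻ y in {y | r x y}, ENNReal.ofReal (2 ^ p) *
          (ENNReal.ofReal (|u y| ^ p / d ^ ((n : ℝ) + δ * p)) +
            ENNReal.ofReal (L ^ ((n : ℝ) + δ * p)) * fracKernel n δ p u x y) :=
        setLIntegral_mono' hmeas fun y hy =>
          ofReal_abs_rpow_div_le_add_fracKernel hp (by positivity) hd (hr.dist_le hy)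
    _ = ENNReal.ofReal (2 ^ p) *
          ((∫⁻ y in {y | r x y}, ENNReal.ofReal (|u y| ^ p / d ^ ((n : ℝ) + δ * p))) +
            ENNReal.ofReal (L ^ ((n : ℝ) + δ * p)) *
              ∫⁻ y in {y | r x y}, fracKernel n δ p u x y) := by
        rw [lintegral_const_mul' _ _ ENNReal.ofReal_ne_top, lintegral_add_left,
          lintegral_const_mul' _ _ ENNReal.ofReal_ne_top]
        exact ((hu.abs.pow_const p).div_const _).ennreal_ofReal
    _ ≤ _ := by
        gcongr
        exact fun y hy => hr.right_mem hy

lemma lintegral_lintegral_swap (hr : IsAveragingRelation D m V a L r)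
    {f : Eucl n → Eucl n → ℝ≥0∞} (hf : Measurable (Function.uncurry f)) :
    ∫⁻ x in D, ∫⁻ y in {y | r x y}, f x y = ∫⁻ y in D, ∫⁻ x in {x | r x y}, f x y := by
  set g : Eucl n × Eucl n → ℝ≥0∞ := {z | r z.1 z.2}.indicator (Function.uncurry f)
  have hleft : ∀ x, ∫⁻ y in {y | r x y}, f x y = ∫⁻ y in D, g (x, y) := by
    intro x
    have hmeas : MeasurableSet {y | r x y} := measurable_prodMk_left hr.measurableSet
    rw [← Measure.restrict_restrict_of_subset (fun y hy => hr.right_mem hy : {y | r x y} ⊆ D),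
      ← lintegral_indicator hmeas]
    rfl
  have hright : ∀ y, ∫⁻ x in {x | r x y}, f x y = ∫⁻ x in D, g (x, y) := by
    intro y
    have hmeas : MeasurableSet {x | r x y} := measurable_prodMk_right hr.measurableSet
    rw [← Measure.restrict_restrict_of_subset (fun x hx => hr.left_mem hx : {x | r x y} ⊆ D),
      ← lintegral_indicator hmeas]
    rfl
  simp only [hleft, hright]
  exact MeasureTheory.lintegral_lintegral_swap (f := fun x y => g (x, y))
    (hf.indicator hr.measurableSet).aemeasurable

lemma lintegral_lintegral_le (hr : IsAveragingRelation D m V a L r) (hO : IsOpen D)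
    (hF : (frontier D).Nonempty) (hδ : 0 ≤ δ) (hp : 0 < p) (ha : 0 < a) (hu : Measurable u) :
    ∫⁻ x in D, ∫⁻ y in {y | r x y},
        ENNReal.ofReal (|u y| ^ p / infDist x (frontier D) ^ ((n : ℝ) + δ * p)) ≤
      ENNReal.ofReal (V / a ^ ((n : ℝ) + δ * p)) * weightedIntegral D u p (δ * p) := by
  rw [hr.lintegral_lintegral_swap, weightedIntegral,
    ← lintegral_const_mul' _ _ ENNReal.ofReal_ne_top]
  · refine setLIntegral_mono' hO.measurableSet fun y hy => ?_
    set d := infDist y (frontier D)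
    have hd : 0 < d := infDist_frontier_pos hO hF hy
    calc ∫⁻ x in {x | r x y}, ENNReal.ofReal (|u y| ^ p /
            infDist x (frontier D) ^ ((n : ℝ) + δ * p))
        ≤ ∫⁻ _ in {x | r x y}, ENNReal.ofReal (|u y| ^ p / (a * d) ^ ((n : ℝ) + δ * p)) := by
          refine setLIntegral_mono' (measurable_prodMk_right hr.measurableSet) fun x hx => ?_
          gcongr
          exact hr.infDist_le hx
      _ = ENNReal.ofReal (|u y| ^ p / (a * d) ^ ((n : ℝ) + δ * p)) * volume {x | r x y} :=
          setLIntegral_const _ _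
      _ ≤ ENNReal.ofReal (|u y| ^ p / (a * d) ^ ((n : ℝ) + δ * p)) *
            ENNReal.ofReal (V * d ^ n) := by
          gcongr
          exact hr.volume_le y hy
      _ = ENNReal.ofReal (V / a ^ ((n : ℝ) + δ * p)) *
            ENNReal.ofReal (|u y| ^ p / d ^ (δ * p)) := by
          rw [← ENNReal.ofReal_mul (by positivity), ← ENNReal.ofReal_mul' (by positivity),
            Real.mul_rpow ha.le hd.le, Real.rpow_add hd, Real.rpow_natCast]
          congr 1
          field_simp
  · exact ((hu.comp measurable_snd).abs.pow_const p).div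
      (((continuous_infDist_pt _).measurable.comp measurable_fst).pow_const _) |>.ennreal_ofReal

lemma mul_weightedIntegral_le (hr : IsAveragingRelation D m V a L r) (hO : IsOpen D)
    (hF : (frontier D).Nonempty) (hδ : 0 ≤ δ) (hp : 0 < p) (hm : 0 ≤ m) (ha : 0 < a)
    (hu : Measurable u) :
    ENNReal.ofReal m * weightedIntegral D u p (δ * p) ≤
      ENNReal.ofReal (2 ^ p) *
        (ENNReal.ofReal (V / a ^ ((n : ℝ) + δ * p)) * weightedIntegral D u p (δ * p) +
          ENNReal.ofReal (L ^ ((n : ℝ) + δ * p)) * fracEnergy n δ p D u) := by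
  rw [weightedIntegral, ← lintegral_const_mul' _ _ ENNReal.ofReal_ne_top, ← weightedIntegral]
  refine (setLIntegral_mono' hO.measurableSet fun x hx =>
    hr.mul_abs_rpow_div_le hO hF hδ hp hm hu hx).trans ?_
  rw [lintegral_const_mul' _ _ ENNReal.ofReal_ne_top, lintegral_add_right _
    ((measurable_fracKernel hu).lintegral_prod_right'.const_mul _),
    lintegral_const_mul' _ _ ENNReal.ofReal_ne_top, ← fracEnergy]
  gcongr
  exact hr.lintegral_lintegral_le hO hF hδ hp ha hu

lemma hasFracHardy (hr : IsAveragingRelation D m V a L r) (hO : IsOpen D)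
    (hF : (frontier D).Nonempty) (hδ : 0 ≤ δ) (hp : 0 < p) (hm : 0 < m) (ha : 0 < a)
    (hsmall : 2 ^ p * (V / a ^ ((n : ℝ) + δ * p)) ≤ m / 2) :
    HasFracHardy n δ p p (2 ^ p * L ^ ((n : ℝ) + δ * p) / (m / 2)) D := by
  rw [hasFracHardy_iff hp.ne']
  intro u hu
  rw [show p * (δ - n / p) + n = δ * p by field_simp; ring, div_self hp.ne', ENNReal.rpow_one]
  set H := weightedIntegral D u p (δ * p)
  set E := fracEnergy n δ p D u
  have hH : H ≠ ⊤ := (weightedIntegral_lt_top hO hF hu hp).ne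
  have hhalf : ENNReal.ofReal (m / 2) * H ≠ ⊤ := ENNReal.mul_ne_top ENNReal.ofReal_ne_top hH
  have habsorb : ENNReal.ofReal (m / 2) * H ≤
      ENNReal.ofReal (2 ^ p * L ^ ((n : ℝ) + δ * p)) * E := by
    refine (ENNReal.add_le_add_iff_left hhalf).1 ?_
    calc ENNReal.ofReal (m / 2) * H + ENNReal.ofReal (m / 2) * H = ENNReal.ofReal m * H := by
          rw [← add_mul, ← ENNReal.ofReal_add (by positivity) (by positivity), add_halves]
      _ ≤ ENNReal.ofReal (2 ^ p) * (ENNReal.ofReal (V / a ^ ((n : ℝ) + δ * p)) * H +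
            ENNReal.ofReal (L ^ ((n : ℝ) + δ * p)) * E) :=
          hr.mul_weightedIntegral_le hO hF hδ hp hm.le ha hu.continuous.measurable
      _ = ENNReal.ofReal (2 ^ p * (V / a ^ ((n : ℝ) + δ * p))) * H +
            ENNReal.ofReal (2 ^ p * L ^ ((n : ℝ) + δ * p)) * E := by
          rw [ENNReal.ofReal_mul (by positivity), ENNReal.ofReal_mul (by positivity)]
          ring
      _ ≤ _ := by gcongr
  rw [ENNReal.ofReal_div_of_pos (half_pos hm), ← ENNReal.mul_div_right_comm,
    ENNReal.le_div_iff_mul_le (Or.inl (by simpa using hm)) (Or.inl ENNReal.ofReal_ne_top),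
    mul_comm H]
  exact habsorb

end IsAveragingRelation

lemma exists_hasFracHardy_of_isAveragingRelation (hO : IsOpen D) (hF : (frontier D).Nonempty)
    (hδ : 0 ≤ δ) (hp : 0 < p) (hm : 0 < m) (ha : 0 < a) {α β γ : ℝ}
    (hexp : γ < α + β * ((n : ℝ) + δ * p))
    (h : ∀ M : ℝ, 1 < M → ∃ L > 0, ∃ r,
      IsAveragingRelation D (m * M ^ α) (V * M ^ γ) (a * M ^ β) L r) :
    ∃ C : ℝ, 0 < C ∧ HasFracHardy n δ p p C D := by
  set e : ℝ := (n : ℝ) + δ * p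
  have hlim := (tendsto_rpow_neg_atTop (sub_pos.2 hexp)).const_mul (2 ^ p * (V / a ^ e))
  rw [mul_zero] at hlim
  obtain ⟨M, hsmall, hM⟩ := ((hlim.eventually_le_const (half_pos hm)).and
    (Filter.eventually_gt_atTop 1)).exists
  obtain ⟨L, hL, r, hr⟩ := h M hM
  have hM0 : 0 < M := one_pos.trans hM
  refine ⟨_, ?_, hr.hasFracHardy hO hF hδ hp (by positivity) (by positivity) ?_⟩
  · positivity
  calc 2 ^ p * (V * M ^ γ / (a * M ^ β) ^ e)
      = 2 ^ p * (V / a ^ e) * M ^ (-(α + β * e - γ)) * M ^ α := by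
        rw [Real.mul_rpow ha.le (by positivity), ← Real.rpow_mul hM0.le, mul_assoc (2 ^ p * _),
          ← Real.rpow_add hM0, show -(α + β * e - γ) + α = γ - β * e by ring,
          Real.rpow_sub hM0]
        field_simp
    _ ≤ m / 2 * M ^ α := by gcongr
    _ = m * M ^ α / 2 := by ring

end Averaging

section ThinBoundary

variable {n : ℕ} {κ M A lam δ p : ℝ} {D : Set (Eucl n)}

/-- The points `y` over which `u` is averaged when `∂D` is thin: they lie within `M * d x` of `x`,
and their distance to `∂D` is comparable to `M * d x`, where `d x` is the distance of `x` to `∂D`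
and `M` is large. -/
def IsOuterNeighbor (κ M : ℝ) (D : Set (Eucl n)) (x y : Eucl n) : Prop :=
  x ∈ D ∧ y ∈ D ∧ dist x y < M * infDist x (frontier D) ∧
    κ * (M * infDist x (frontier D)) ≤ 2 * infDist y (frontier D)

lemma measurableSet_isOuterNeighbor (hO : IsOpen D) (κ M : ℝ) :
    MeasurableSet {z : Eucl n × Eucl n | IsOuterNeighbor κ M D z.1 z.2} := by
  have hd : Measurable fun x => infDist x (frontier D) := (continuous_infDist_pt _).measurable
  exact (measurable_fst hO.measurableSet).inter <| (measurable_snd hO.measurableSet).inter <|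
    (measurableSet_lt (measurable_fst.dist measurable_snd)
      ((hd.comp measurable_fst).const_mul M)).inter
    (measurableSet_le (((hd.comp measurable_fst).const_mul M).const_mul κ)
      ((hd.comp measurable_snd).const_mul 2))

lemma HasCorkscrews.le_volume_isOuterNeighbor (hD : HasCorkscrews κ D) (hκ : 0 < κ)
    (hO : IsOpen D) (hF : (frontier D).Nonempty) (hM : 0 < M) {x : Eucl n} (hx : x ∈ D) :
    ENNReal.ofReal (unitBallVolume n * (κ / 2 * (M * infDist x (frontier D))) ^ n) ≤
      volume {y | IsOuterNeighbor κ M D x y} := by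
  have hd := infDist_frontier_pos hO hF hx
  set R := M * infDist x (frontier D)
  have hκR : 0 < κ * R := by positivity
  obtain ⟨c, hc⟩ := hD x hx R (by positivity)
  rw [← volume_ball_eq_ofReal c (by positivity)]
  refine measure_mono fun y hy => ?_
  have hy' : y ∈ D ∩ ball x R := hc (ball_subset_ball (by linarith) hy)
  have hdy : κ / 2 * R ≤ infDist y (frontier D) := by
    refine le_infDist_frontier_of_mem_ball hO hF ?_ hy
    rw [show 2 * (κ / 2 * R) = κ * R by ring]
    exact hc.trans inter_subset_left
  exact ⟨hx, hy'.1, mem_ball'.1 hy'.2, by linarith⟩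

lemma setOf_isOuterNeighbor_subset_biUnion_ball (hO : IsOpen D) (hF : (frontier D).Nonempty)
    (hκ : 0 < κ) (hM : 1 ≤ M) {y w : Eucl n} {r : ℝ}
    (hw : infDist y (frontier D) = dist y w) (hr : κ * (M * r) = 2 * infDist y (frontier D))
    {F : Finset (Eucl n)}
    (hcover : frontier D ∩ ball w ((4 / κ + 1) * infDist y (frontier D)) ⊆ ⋃ z ∈ F, ball z r) :
    {x | IsOuterNeighbor κ M D x y} ⊆ ⋃ z ∈ F, ball z (2 * r) := by
  rintro x ⟨hxD, -, hxy, hxle⟩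
  have hd := infDist_frontier_pos hO hF hxD
  set d := infDist x (frontier D)
  have hM0 : 0 < M := by linarith
  have hdr : d ≤ r := by
    have := hxle.trans_eq hr.symm
    exact le_of_mul_le_mul_left (le_of_mul_le_mul_left this hκ) hM0
  obtain ⟨z, hz, hxz⟩ := isClosed_frontier.exists_infDist_eq_dist hF x
  have hzw : dist z w < (4 / κ + 1) * infDist y (frontier D) := by
    have hMd : M * d ≤ 2 / κ * infDist y (frontier D) := by
      rw [div_mul_eq_mul_div, le_div_iff₀ hκ]
      linarith
    calc dist z w ≤ dist z x + dist x y + dist y w := dist_triangle4 _ _ _ _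
      _ < d + M * d + infDist y (frontier D) := by
          rw [dist_comm z x, ← hxz, ← hw]
          linarith
      _ ≤ M * d + M * d + infDist y (frontier D) := by nlinarith
      _ ≤ (4 / κ + 1) * infDist y (frontier D) := by
          rw [show 4 / κ = 2 / κ + 2 / κ by ring]
          linarith
  obtain ⟨v, hv, hzv⟩ := mem_iUnion₂.1 (hcover ⟨hz, hzw⟩)
  refine mem_iUnion₂.2 ⟨v, hv, ?_⟩
  rw [mem_ball] at hzv ⊢
  linarith [dist_triangle x z v]

lemma volume_isOuterNeighbor_le (hO : IsOpen D) (hF : (frontier D).Nonempty) (hκ : 0 < κ)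
    (hM : 1 < M)
    (hcover : HasCoversAtAllScales A lam (frontier D))
    {y : Eucl n} (hy : y ∈ D) :
    volume {x | IsOuterNeighbor κ M D x y} ≤ ENNReal.ofReal (A * ((2 + κ / 2) * M) ^ lam *
      (unitBallVolume n * (4 / (κ * M) * infDist y (frontier D)) ^ n)) := by
  have hd := infDist_frontier_pos hO hF hy
  set d := infDist y (frontier D) with hdy
  have hω := unitBallVolume_pos n
  have : 0 < M := one_pos.trans hM
  obtain ⟨w, hw, hyw⟩ := isClosed_frontier.exists_infDist_eq_dist hF y
  have hrR : 2 / (κ * M) * d < (4 / κ + 1) * d := by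
    gcongr
    calc 2 / (κ * M) ≤ 4 / κ := by
          rw [div_le_div_iff₀ (by positivity) hκ]
          nlinarith
      _ < 4 / κ + 1 := lt_add_one _
  obtain ⟨F, hcard, hF'⟩ := hcover w hw (2 / (κ * M) * d) ((4 / κ + 1) * d) (by positivity) hrR
  rw [show (4 / κ + 1) * d / (2 / (κ * M) * d) = (2 + κ / 2) * M by field_simp; ring] at hcard
  calc volume {x | IsOuterNeighbor κ M D x y}
      ≤ volume (⋃ z ∈ F, ball z (2 * (2 / (κ * M) * d))) :=
        measure_mono (setOf_isOuterNeighbor_subset_biUnion_ball hO hF hκ hM.le hyw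
          (by rw [← hdy]; field_simp) hF')
    _ ≤ ENNReal.ofReal (F.card * (unitBallVolume n * (2 * (2 / (κ * M) * d)) ^ n)) :=
        volume_biUnion_ball_le F id (by positivity)
    _ ≤ _ := by
        rw [show 2 * (2 / (κ * M) * d) = 4 / (κ * M) * d by ring]
        gcongr

lemma isAveragingRelation_isOuterNeighbor (hO : IsOpen D) (hF : (frontier D).Nonempty)
    (hκ : 0 < κ) (hD : HasCorkscrews κ D) (hM : 1 < M)
    (hcover : HasCoversAtAllScales A lam (frontier D)) :
    IsAveragingRelation D (unitBallVolume n * (κ / 2) ^ n * M ^ (n : ℝ))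
      (A * (2 + κ / 2) ^ lam * (unitBallVolume n * (4 / κ) ^ n) * M ^ (lam - n))
      (1 / 2 * M ^ (-1 : ℝ)) M (IsOuterNeighbor κ M D) where
  measurableSet := measurableSet_isOuterNeighbor hO κ M
  left_mem h := h.1
  right_mem h := h.2.1
  dist_le h := h.2.2.1.le
  infDist_le {x y} h := by
    have hd := infDist_frontier_pos hO hF h.1
    have hdy : infDist y (frontier D) ≤ infDist x (frontier D) + dist y x :=
      infDist_le_infDist_add_dist
    rw [Real.rpow_neg_one, ← div_eq_mul_inv, div_div, one_div_mul_eq_div,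
      div_le_iff₀ (by linarith)]
    rw [dist_comm] at hdy
    nlinarith [h.2.2.1]
  le_volume x hx := by
    refine le_of_eq_of_le ?_ (hD.le_volume_isOuterNeighbor hκ hO hF (one_pos.trans hM) hx)
    rw [Real.rpow_natCast, mul_pow, mul_pow]
    congr 1
    ring
  volume_le y hy := by
    have hM0 : 0 < M := one_pos.trans hM
    refine (volume_isOuterNeighbor_le hO hF hκ hM hcover hy).trans_eq ?_
    rw [Real.mul_rpow (by positivity) hM0.le, mul_pow, ← div_div, div_pow _ M, Real.rpow_sub hM0,
      Real.rpow_natCast]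
    congr 1
    ring

theorem exists_hasFracHardy_of_upperAssouadDim_lt (hO : IsOpen D) (hF : (frontier D).Nonempty)
    (hκ : 0 < κ) (hD : HasCorkscrews κ D) (hδ : 0 ≤ δ) (hp : 0 < p)
    (hdim : upperAssouadDim n (frontier D) < n - δ * p) :
    ∃ C : ℝ, 0 < C ∧ HasFracHardy n δ p p C D := by
  obtain ⟨lam, hlam0, hlam, hbound⟩ := exists_upperAssouadBound_of_upperAssouadDim_lt hdim
  obtain ⟨A, hcover⟩ := hbound.exists_hasCoversAtAllScales hlam0
  have hω := unitBallVolume_pos n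
  exact exists_hasFracHardy_of_isAveragingRelation hO hF hδ hp
    (m := unitBallVolume n * (κ / 2) ^ n) (a := 1 / 2) (by positivity) (by positivity)
    (by linarith) fun M hM => ⟨M, one_pos.trans hM, _,
      isAveragingRelation_isOuterNeighbor hO hF hκ hD hM hcover⟩

end ThinBoundary

section ThickBoundary

variable {n : ℕ} {κ M A lam δ p : ℝ} {D : Set (Eucl n)}

/-- The points `y` over which `u` is averaged when `∂D` is thick: they lie within `3 * d x` of `x`,
and their distance to `∂D` is comparable to `d x / M`, where `d x` is the distance of `x` to `∂D`
and `M` is large. -/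
def IsInnerNeighbor (κ M : ℝ) (D : Set (Eucl n)) (x y : Eucl n) : Prop :=
  x ∈ D ∧ y ∈ D ∧ dist x y < 3 * infDist x (frontier D) ∧
    M * infDist y (frontier D) ≤ infDist x (frontier D) ∧
    κ * infDist x (frontier D) ≤ 16 * (M * infDist y (frontier D))

lemma measurableSet_isInnerNeighbor (hO : IsOpen D) (κ M : ℝ) :
    MeasurableSet {z : Eucl n × Eucl n | IsInnerNeighbor κ M D z.1 z.2} := by
  have hd : Measurable fun x => infDist x (frontier D) := (continuous_infDist_pt _).measurable
  exact (measurable_fst hO.measurableSet).inter <| (measurable_snd hO.measurableSet).inter <|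
    (measurableSet_lt (measurable_fst.dist measurable_snd)
      ((hd.comp measurable_fst).const_mul 3)).inter <|
    (measurableSet_le ((hd.comp measurable_snd).const_mul M) (hd.comp measurable_fst)).inter
    (measurableSet_le ((hd.comp measurable_fst).const_mul κ)
      (((hd.comp measurable_snd).const_mul M).const_mul 16))

lemma HasCorkscrews.exists_ball_subset_isInnerNeighbor (hD : HasCorkscrews κ D) (hκ : 0 < κ)
    (hO : IsOpen D) (hF : (frontier D).Nonempty) {x w z : Eucl n} {r : ℝ} (hx : x ∈ D)
    (hr : 0 < r) (hM : 1 ≤ M) (hMr : M * r = infDist x (frontier D))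
    (hxw : infDist x (frontier D) = dist x w)
    (hz : z ∈ frontier D ∩ ball w (infDist x (frontier D))) :
    ∃ c, ball c (κ / 16 * r) ⊆ {y | IsInnerNeighbor κ M D x y} ∩ ball z (r / 4) := by
  obtain ⟨c, hc⟩ := hD.exists_ball_subset_of_mem_closure (frontier_subset_closure hz.1)
    (show 0 < r / 4 by positivity)
  refine ⟨c, fun y hy => ?_⟩
  have hy' : y ∈ D ∩ ball z (r / 4) := hc (ball_subset_ball (by nlinarith) hy)
  have hyz : dist y z < r / 4 := hy'.2
  have hdy : κ / 16 * r ≤ infDist y (frontier D) := by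
    refine le_infDist_frontier_of_mem_ball hO hF ?_ hy
    rw [show 2 * (κ / 16 * r) = κ * (r / 4 / 2) by ring]
    exact hc.trans inter_subset_left
  have hxy : dist x y < 3 * infDist x (frontier D) := by
    have hzw : dist w z < infDist x (frontier D) := mem_ball'.1 hz.2
    have hrd : r ≤ infDist x (frontier D) := by nlinarith
    linarith [dist_triangle4 x w z y, dist_comm z y]
  refine ⟨⟨hx, hy'.1, hxy, ?_, ?_⟩, hy'.2⟩
  · rw [← hMr]
    gcongr
    linarith [infDist_le_dist_of_mem (x := y) hz.1]
  · rw [← hMr]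
    nlinarith

lemma HasCorkscrews.le_volume_isInnerNeighbor (hD : HasCorkscrews κ D) (hκ : 0 < κ)
    (hO : IsOpen D) (hF : (frontier D).Nonempty) (hM : 1 < M)
    (hsep : HasSeparatedSetsAtAllScales A lam (frontier D))
    {x : Eucl n} (hx : x ∈ D) :
    ENNReal.ofReal (A * M ^ lam *
        (unitBallVolume n * (κ / 16 * (infDist x (frontier D) / M)) ^ n)) ≤
      volume {y | IsInnerNeighbor κ M D x y} := by
  have hd := infDist_frontier_pos hO hF hx
  set d := infDist x (frontier D)
  have hω := unitBallVolume_pos n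
  have hM0 : 0 < M := one_pos.trans hM
  obtain ⟨w, hw, hxw⟩ := isClosed_frontier.exists_infDist_eq_dist hF x
  obtain ⟨F, hFsub, hFsep, hcard⟩ := hsep w hw (d / M) d (by positivity) (div_lt_self hd hM)
  rw [div_div_cancel₀ hd.ne'] at hcard
  have hballs : ∀ z ∈ F, ∃ c, ball c (κ / 16 * (d / M)) ⊆
      {y | IsInnerNeighbor κ M D x y} ∩ ball z (d / M / 4) := fun z hz =>
    hD.exists_ball_subset_isInnerNeighbor hκ hO hF hx (by positivity) hM.le
      (mul_div_cancel₀ d hM0.ne') hxw (hFsub hz)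
  choose! c hc using hballs
  have hdisj : (F : Set (Eucl n)).PairwiseDisjoint fun z => ball (c z) (κ / 16 * (d / M)) :=
    fun z hz z' hz' hne => (ball_disjoint_ball (by linarith [hFsep hz hz' hne])).mono
      ((hc z hz).trans inter_subset_right) ((hc z' hz').trans inter_subset_right)
  calc ENNReal.ofReal (A * M ^ lam * (unitBallVolume n * (κ / 16 * (d / M)) ^ n))
      ≤ ENNReal.ofReal (F.card * (unitBallVolume n * (κ / 16 * (d / M)) ^ n)) := by gcongr
    _ = volume (⋃ z ∈ F, ball (c z) (κ / 16 * (d / M))) :=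
        (volume_biUnion_ball (by positivity) hdisj).symm
    _ ≤ volume {y | IsInnerNeighbor κ M D x y} :=
        measure_mono (iUnion₂_subset fun z hz => (hc z hz).trans inter_subset_left)

lemma volume_isInnerNeighbor_le (hO : IsOpen D) (hF : (frontier D).Nonempty) (hκ : 0 < κ)
    (hM : 0 < M) {y : Eucl n} (hy : y ∈ D) :
    volume {x | IsInnerNeighbor κ M D x y} ≤
      ENNReal.ofReal (unitBallVolume n * (48 / κ * (M * infDist y (frontier D))) ^ n) := by
  have hd := infDist_frontier_pos hO hF hy
  rw [← volume_ball_eq_ofReal y (by positivity)]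
  refine measure_mono fun x ⟨_, _, hxy, _, hle⟩ => mem_ball.2 (hxy.trans_le ?_)
  rw [div_mul_eq_mul_div, le_div_iff₀ hκ]
  linarith

lemma isAveragingRelation_isInnerNeighbor (hO : IsOpen D) (hF : (frontier D).Nonempty)
    (hκ : 0 < κ) (hD : HasCorkscrews κ D) (hM : 1 < M)
    (hsep : HasSeparatedSetsAtAllScales A lam (frontier D)) :
    IsAveragingRelation D (A * (unitBallVolume n * (κ / 16) ^ n) * M ^ (lam - n))
      (unitBallVolume n * (48 / κ) ^ n * M ^ (n : ℝ)) (1 * M ^ (1 : ℝ)) 3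
      (IsInnerNeighbor κ M D) where
  measurableSet := measurableSet_isInnerNeighbor hO κ M
  left_mem h := h.1
  right_mem h := h.2.1
  dist_le h := h.2.2.1.le
  infDist_le h := by
    rw [one_mul, Real.rpow_one]
    exact h.2.2.2.1
  le_volume x hx := by
    refine le_of_eq_of_le ?_ (hD.le_volume_isInnerNeighbor hκ hO hF hM hsep hx)
    rw [Real.rpow_sub (one_pos.trans hM), Real.rpow_natCast, mul_pow, div_pow _ M]
    congr 1
    ring
  volume_le y hy := by
    refine (volume_isInnerNeighbor_le hO hF hκ (one_pos.trans hM) hy).trans_eq ?_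
    rw [Real.rpow_natCast, mul_pow, mul_pow]
    congr 1
    ring

theorem exists_hasFracHardy_of_lt_lowerAssouadDim (hO : IsOpen D)
    (hF : ¬ Bornology.IsBounded (frontier D)) (hκ : 0 < κ) (hD : HasCorkscrews κ D)
    (hδ : 0 ≤ δ) (hp : 0 < p) (hδp : δ * p ≤ n)
    (hdim : (n : ℝ) - δ * p < lowerAssouadDim n (frontier D)) :
    ∃ C : ℝ, 0 < C ∧ HasFracHardy n δ p p C D := by
  have hne : (frontier D).Nonempty :=
    nonempty_iff_ne_empty.2 fun h => hF (h ▸ Bornology.isBounded_empty)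
  obtain ⟨lam, hlam, hbound⟩ :=
    exists_lowerAssouadBound_of_lt_lowerAssouadDim (sub_nonneg.2 hδp) hdim
  obtain ⟨A, hA, hsep⟩ := hbound.exists_hasSeparatedSetsAtAllScales hF
  have hω := unitBallVolume_pos n
  exact exists_hasFracHardy_of_isAveragingRelation hO hne hδ hp
    (m := A * (unitBallVolume n * (κ / 16) ^ n)) (a := 1) (by positivity) (by positivity)
    (by linarith) fun M hM => ⟨3, by norm_num, _,
      isAveragingRelation_isInnerNeighbor hO hne hκ hD hM hsep⟩

end ThickBoundary

section SobolevEndpoint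

variable {n : ℕ} {δ p P r : ℝ} {D : Set (Eucl n)} {u : Eucl n → ℝ} {x : Eucl n}

/-- The sum of the integrands, at `x`, of `fracEnergy n δ p D u` and of the left-hand side of the
`(δ,p,p)`-Hardy inequality. -/
noncomputable def hardyEnergyDensity (n : ℕ) (δ p : ℝ) (D : Set (Eucl n)) (u : Eucl n → ℝ)
    (x : Eucl n) : ℝ≥0∞ :=
  (∫⁻ y in D, fracKernel n δ p u x y) +
    ENNReal.ofReal (|u x| ^ p / infDist x (frontier D) ^ (δ * p))

lemma lintegral_hardyEnergyDensity (hu : Measurable u) :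
    ∫⁻ x in D, hardyEnergyDensity n δ p D u x =
      fracEnergy n δ p D u + weightedIntegral D u p (δ * p) :=
  lintegral_add_right _ (measurable_abs_rpow_div_infDist_rpow D hu p (δ * p))

lemma ofReal_half_le_volume_ball_diff (hr : 0 < r) {A : Set (Eucl n)}
    (hA : volume A ≤ ENNReal.ofReal (unitBallVolume n * r ^ n / 2)) :
    ENNReal.ofReal (unitBallVolume n * r ^ n / 2) ≤ volume (ball x r \ A) := by
  have hω := unitBallVolume_pos n
  calc ENNReal.ofReal (unitBallVolume n * r ^ n / 2)
      = volume (ball x r) - ENNReal.ofReal (unitBallVolume n * r ^ n / 2) := by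
        rw [volume_ball_eq_ofReal x hr, ← ENNReal.ofReal_sub _ (by positivity), sub_half]
    _ ≤ volume (ball x r) - volume A := by gcongr
    _ ≤ volume (ball x r \ A) := le_measure_sdiff

lemma ofReal_abs_rpow_le_mul_lintegral_fracKernel (hp : 0 < p) (he : 0 ≤ (n : ℝ) + δ * p)
    (hu : Measurable u) (hr : 0 < r) (hB : ball x r ⊆ D)
    (hvol : volume {y ∈ D | |u x| / 2 ≤ |u y|} ≤ ENNReal.ofReal (unitBallVolume n * r ^ n / 2)) :
    ENNReal.ofReal (|u x| ^ p) ≤ ENNReal.ofReal (2 ^ (p + 1) / unitBallVolume n * r ^ (δ * p)) *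
      ∫⁻ y in D, fracKernel n δ p u x y := by
  have hω := unitBallVolume_pos n
  set ω := unitBallVolume n
  set e : ℝ := (n : ℝ) + δ * p
  set good : Set (Eucl n) := {y ∈ ball x r | |u y| < |u x| / 2}
  have hgood : ENNReal.ofReal (ω * r ^ n / 2) ≤ volume good :=
    (ofReal_half_le_volume_ball_diff hr hvol).trans <| measure_mono fun y hy =>
      ⟨hy.1, lt_of_not_ge fun h => hy.2 ⟨hB hy.1, h⟩⟩
  have hmeas : MeasurableSet good :=
    measurableSet_ball.inter (measurableSet_lt hu.abs measurable_const)
  have hkernel : ∀ y ∈ good, ENNReal.ofReal ((|u x| / 2) ^ p / r ^ e) ≤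
      fracKernel n δ p u x y := by
    rintro y ⟨hyr, hyu⟩
    have hgap : |u x| / 2 ≤ |u x - u y| := by linarith [abs_sub_abs_le_abs_sub (u x) (u y)]
    calc ENNReal.ofReal ((|u x| / 2) ^ p / r ^ e) ≤ ENNReal.ofReal (|u x - u y| ^ p / r ^ e) := by
          gcongr
      _ ≤ ENNReal.ofReal (1 ^ e) * fracKernel n δ p u x y :=
          ofReal_abs_sub_rpow_div_le_mul_fracKernel hp he hr (by
            rw [one_mul, dist_comm]
            exact (mem_ball.1 hyr).le)
      _ = fracKernel n δ p u x y := by rw [Real.one_rpow, ENNReal.ofReal_one, one_mul]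
  calc ENNReal.ofReal (|u x| ^ p)
      = ENNReal.ofReal (2 ^ (p + 1) / ω * r ^ (δ * p)) *
          (ENNReal.ofReal ((|u x| / 2) ^ p / r ^ e) * ENNReal.ofReal (ω * r ^ n / 2)) := by
        rw [← ENNReal.ofReal_mul (by positivity), ← ENNReal.ofReal_mul (by positivity),
          Real.rpow_add hr, Real.rpow_natCast, Real.div_rpow (abs_nonneg _) zero_le_two,
          Real.rpow_add_one two_ne_zero]
        congr 1
        field_simp
    _ ≤ ENNReal.ofReal (2 ^ (p + 1) / ω * r ^ (δ * p)) *
          (ENNReal.ofReal ((|u x| / 2) ^ p / r ^ e) * volume good) := by gcongr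
    _ ≤ ENNReal.ofReal (2 ^ (p + 1) / ω * r ^ (δ * p)) * ∫⁻ y in good, fracKernel n δ p u x y := by
        rw [← setLIntegral_const]
        exact mul_le_mul_right (setLIntegral_mono' hmeas hkernel) _
    _ ≤ ENNReal.ofReal (2 ^ (p + 1) / ω * r ^ (δ * p)) * ∫⁻ y in D, fracKernel n δ p u x y := by
        gcongr
        exact fun y hy => hB hy.1

/-- For `r` beyond the distance to `∂D` the ball need not lie in `D`, but then the Hardy term
alone suffices. -/
lemma ofReal_abs_rpow_le_mul_hardyEnergyDensity (hO : IsOpen D) (hF : (frontier D).Nonempty)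
    (hδ : 0 ≤ δ) (hp : 0 < p) (hu : Measurable u) (hx : x ∈ D) (hr : 0 < r)
    (hvol : volume {y ∈ D | |u x| / 2 ≤ |u y|} ≤ ENNReal.ofReal (unitBallVolume n * r ^ n / 2)) :
    ENNReal.ofReal (|u x| ^ p) ≤
      ENNReal.ofReal ((2 ^ (p + 1) / unitBallVolume n + 1) * r ^ (δ * p)) *
        hardyEnergyDensity n δ p D u x := by
  have hω := unitBallVolume_pos n
  have hd : 0 < infDist x (frontier D) := infDist_frontier_pos hO hF hx
  set d := infDist x (frontier D)
  rcases le_or_gt r d with hrd | hdr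
  · refine (ofReal_abs_rpow_le_mul_lintegral_fracKernel hp (by positivity) hu hr
      ((ball_subset_ball hrd).trans (ball_infDist_frontier_subset hx)) hvol).trans ?_
    gcongr
    · exact le_add_of_nonneg_right zero_le_one
    · exact le_self_add
  · calc ENNReal.ofReal (|u x| ^ p)
        = ENNReal.ofReal (1 * d ^ (δ * p)) * ENNReal.ofReal (|u x| ^ p / d ^ (δ * p)) := by
          rw [← ENNReal.ofReal_mul (by positivity)]
          congr 1
          field_simp
      _ ≤ _ := by
          gcongr
          · exact le_add_of_nonneg_left (by positivity)
          · exact le_add_self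

/-- The radius `r = (2v/ω)^(1/n)` makes the superlevel set fill at most half of the ball. -/
lemma ofReal_abs_rpow_le_of_volume_le (hn : n ≠ 0) (hO : IsOpen D) (hF : (frontier D).Nonempty)
    (hδ : 0 ≤ δ) (hp : 0 < p) (hu : Measurable u) (hx : x ∈ D) {v : ℝ} (hv : 0 < v)
    (hvol : volume {y ∈ D | |u x| / 2 ≤ |u y|} ≤ ENNReal.ofReal v) :
    ENNReal.ofReal (|u x| ^ p) ≤
      ENNReal.ofReal ((2 ^ (p + 1) / unitBallVolume n + 1) *
        (2 * v / unitBallVolume n) ^ (δ * p / n)) * hardyEnergyDensity n δ p D u x := by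
  have hω := unitBallVolume_pos n
  set s := 2 * v / unitBallVolume n
  have hs : 0 < s := by positivity
  have hball : v = unitBallVolume n * (s ^ (n : ℝ)⁻¹) ^ n / 2 := by
    rw [Real.rpow_inv_natCast_pow hs.le hn, mul_div_cancel₀ _ hω.ne',
      mul_div_cancel_left₀ v two_ne_zero]
  rw [hball] at hvol
  have hlocal := ofReal_abs_rpow_le_mul_hardyEnergyDensity hO hF hδ hp hu hx (by positivity) hvol
  rwa [← Real.rpow_mul hs.le, inv_mul_eq_div] at hlocal

lemma volume_le_abs_le_ofReal_div (hO : IsOpen D) (hu : Measurable u) (hP : 0 ≤ P) {w N : ℝ}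
    (hw : 0 < w) (hN : ∫⁻ y in D, ENNReal.ofReal (|u y| ^ P) ≤ ENNReal.ofReal N) :
    volume {y ∈ D | w ≤ |u y|} ≤ ENNReal.ofReal (N / w ^ P) := by
  have hwP : 0 < w ^ P := by positivity
  calc volume {y ∈ D | w ≤ |u y|}
      ≤ volume.restrict D {y | ENNReal.ofReal (w ^ P) ≤ ENNReal.ofReal (|u y| ^ P)} := by
        rw [Measure.restrict_apply' hO.measurableSet]
        exact measure_mono fun y ⟨hyD, hy⟩ =>
          ⟨ENNReal.ofReal_le_ofReal (Real.rpow_le_rpow hw.le hy hP), hyD⟩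
    _ ≤ (∫⁻ y in D, ENNReal.ofReal (|u y| ^ P)) / ENNReal.ofReal (w ^ P) :=
        meas_ge_le_lintegral_div (hu.abs.pow_const P).ennreal_ofReal.aemeasurable
          (ENNReal.ofReal_pos.2 hwP).ne' ENNReal.ofReal_ne_top
    _ ≤ ENNReal.ofReal (N / w ^ P) := by
        rw [ENNReal.ofReal_div_of_pos hwP]
        gcongr

lemma exists_ofReal_abs_rpow_le_mul_hardyEnergyDensity (hn : n ≠ 0) (hO : IsOpen D)
    (hF : (frontier D).Nonempty) (hδ : 0 ≤ δ) (hp : 0 < p) (hP : 0 < P)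
    (hpP : 1 / p - 1 / P = δ / n) :
    ∃ K : ℝ, 0 < K ∧ ∀ u : Eucl n → ℝ, Measurable u → ∀ N : ℝ, 0 < N →
      ∫⁻ y in D, ENNReal.ofReal (|u y| ^ P) ≤ ENNReal.ofReal N → ∀ x ∈ D,
      ENNReal.ofReal (|u x| ^ P) ≤
        ENNReal.ofReal (K * N ^ (δ * p / n)) * hardyEnergyDensity n δ p D u x := by
  have hω := unitBallVolume_pos n
  set ω := unitBallVolume n
  set θ := δ * p / n
  set A := 2 ^ (p + 1) / ω + 1
  have hPθ : P = P * θ + p := by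
    simp only [θ]
    field_simp at hpP ⊢
    linarith
  refine ⟨A * (2 * 2 ^ P / ω) ^ θ, by positivity, fun u hu N hN hNu x hx => ?_⟩
  rcases (abs_nonneg (u x)).eq_or_lt with hux | hw
  · simp [← hux, Real.zero_rpow hP.ne']
  have hlocal := ofReal_abs_rpow_le_of_volume_le hn hO hF hδ hp hu hx (by positivity)
    (volume_le_abs_le_ofReal_div hO hu hP.le (half_pos hw) hNu)
  set w := |u x|
  have hradius : (2 * (N / (w / 2) ^ P) / ω) ^ θ = (2 * 2 ^ P / ω) ^ θ * N ^ θ / w ^ (P * θ) := by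
    rw [Real.rpow_mul hw.le, ← Real.mul_rpow (by positivity) hN.le,
      ← Real.div_rpow (by positivity) (by positivity), Real.div_rpow hw.le zero_le_two]
    congr 1
    field_simp
  calc ENNReal.ofReal (w ^ P) = ENNReal.ofReal (w ^ (P * θ)) * ENNReal.ofReal (w ^ p) := by
        rw [← ENNReal.ofReal_mul (by positivity), ← Real.rpow_add hw, ← hPθ]
    _ ≤ ENNReal.ofReal (w ^ (P * θ)) * (ENNReal.ofReal (A * (2 * (N / (w / 2) ^ P) / ω) ^ θ) *
          hardyEnergyDensity n δ p D u x) := by gcongr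
    _ = ENNReal.ofReal (A * (2 * 2 ^ P / ω) ^ θ * N ^ θ) * hardyEnergyDensity n δ p D u x := by
        rw [← mul_assoc, ← ENNReal.ofReal_mul (by positivity), hradius]
        congr 2
        field_simp

lemma le_rpow_of_le_mul_rpow {a b : ℝ≥0∞} {θ : ℝ} (hθ : θ < 1) (ha₀ : a ≠ 0) (ha : a ≠ ⊤)
    (h : a ≤ b * a ^ θ) : a ≤ b ^ (1 - θ)⁻¹ := by
  rw [ENNReal.le_rpow_inv_iff (sub_pos.2 hθ), ENNReal.rpow_sub _ _ ha₀ ha, ENNReal.rpow_one]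
  exact ENNReal.div_le_of_le_mul h

lemma exists_weightedIntegral_le_mul_rpow (hn : n ≠ 0) (hO : IsOpen D)
    (hF : (frontier D).Nonempty) (hδ : 0 ≤ δ) (hp : 0 < p) (hP : 0 < P)
    (hpP : 1 / p - 1 / P = δ / n) :
    ∃ K : ℝ, 0 < K ∧ ∀ u, IsC0 D u → weightedIntegral D u P 0 ≤
      ENNReal.ofReal K * (fracEnergy n δ p D u + weightedIntegral D u p (δ * p)) *
        weightedIntegral D u P 0 ^ (δ * p / n) := by
  obtain ⟨K, hK, hpt⟩ :=
    exists_ofReal_abs_rpow_le_mul_hardyEnergyDensity hn hO hF hδ hp hP hpP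
  refine ⟨K, hK, fun u hu => ?_⟩
  rcases eq_or_ne (weightedIntegral D u P 0) 0 with h0 | h0
  · exact h0.trans_le zero_le
  set N := weightedIntegral D u P 0 with hNdef
  have hfin : N ≠ ⊤ := (weightedIntegral_lt_top hO hF hu hP).ne
  have hNpos : 0 < N.toReal := ENNReal.toReal_pos h0 hfin
  have hN : ∫⁻ y in D, ENNReal.ofReal (|u y| ^ P) = N := by
    simp only [hNdef, weightedIntegral, Real.rpow_zero, div_one]
  calc N = ∫⁻ x in D, ENNReal.ofReal (|u x| ^ P) := hN.symm
    _ ≤ ∫⁻ x in D, ENNReal.ofReal (K * N.toReal ^ (δ * p / n)) *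
          hardyEnergyDensity n δ p D u x :=
        setLIntegral_mono' hO.measurableSet (hpt u hu.continuous.measurable _ hNpos
          (hN.trans_le (ENNReal.ofReal_toReal hfin).ge))
    _ = ENNReal.ofReal K * (fracEnergy n δ p D u + weightedIntegral D u p (δ * p)) *
          N ^ (δ * p / n) := by
        rw [lintegral_const_mul' _ _ ENNReal.ofReal_ne_top,
          lintegral_hardyEnergyDensity hu.continuous.measurable, ENNReal.ofReal_mul hK.le,
          ← ENNReal.ofReal_rpow_of_pos hNpos, ENNReal.ofReal_toReal hfin, mul_right_comm]

lemma HasFracHardy.exists_sobolev_endpoint (hn : n ≠ 0) (hO : IsOpen D)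
    (hF : (frontier D).Nonempty) (hδ : 0 ≤ δ) (hp : 0 < p) (hP : 0 < P)
    (hpP : 1 / p - 1 / P = δ / n) {C₀ : ℝ} (hC₀ : 0 < C₀) (h : HasFracHardy n δ p p C₀ D) :
    ∃ C : ℝ, 0 < C ∧ HasFracHardy n δ p P C D := by
  obtain ⟨K, hK, hself⟩ := exists_weightedIntegral_le_mul_rpow hn hO hF hδ hp hP hpP
  refine ⟨(K * (1 + C₀)) ^ (P / p), by positivity, (hasFracHardy_iff hP.ne').2 fun u hu => ?_⟩
  have hθ : 1 - δ * p / n = (P / p)⁻¹ := by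
    rw [inv_div]
    field_simp at hpP ⊢
    linarith
  have hθ1 : δ * p / n < 1 := by
    rw [← sub_pos, hθ]
    positivity
  have hH := (hasFracHardy_iff hp.ne').1 h u hu
  rw [show p * (δ - n / p) + n = δ * p by field_simp; ring, div_self hp.ne',
    ENNReal.rpow_one] at hH
  have hfin := weightedIntegral_lt_top (s := 0) hO hF hu hP
  rw [show P * (δ - n / p) + n = 0 by field_simp at hpP ⊢; linarith]
  rcases eq_or_ne (weightedIntegral D u P 0) 0 with h0 | h0
  · exact h0.trans_le zero_le
  set E := fracEnergy n δ p D u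
  have hsum : ENNReal.ofReal K * (E + weightedIntegral D u p (δ * p)) ≤
      ENNReal.ofReal (K * (1 + C₀)) * E := by
    rw [ENNReal.ofReal_mul hK.le, ENNReal.ofReal_add zero_le_one hC₀.le, ENNReal.ofReal_one,
      mul_assoc, one_add_mul]
    gcongr
  calc weightedIntegral D u P 0
      ≤ (ENNReal.ofReal K * (E + weightedIntegral D u p (δ * p))) ^ (1 - δ * p / n)⁻¹ :=
        le_rpow_of_le_mul_rpow hθ1 h0 hfin.ne (hself u hu)
    _ ≤ (ENNReal.ofReal (K * (1 + C₀)) * E) ^ (P / p) := by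
        rw [hθ, inv_inv]
        gcongr
    _ = ENNReal.ofReal ((K * (1 + C₀)) ^ (P / p)) * E ^ (P / p) := by
        rw [ENNReal.mul_rpow_of_nonneg _ _ (by positivity),
          ENNReal.ofReal_rpow_of_pos (by positivity)]

end SobolevEndpoint

theorem statement14_general {n : ℕ} {κ : ℝ} (hκ : 0 < κ) {D : Set (Eucl n)} (hO : IsOpen D)
    (hF : (frontier D).Nonempty) (hD : HasCorkscrews κ D) {δ p q : ℝ} (hδ : 0 < δ) (hp : 0 < p)
    (hq : 0 < q) (hpn : p < n / δ) (h1 : 0 ≤ 1 / p - 1 / q) (h2 : 1 / p - 1 / q ≤ δ / n)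
    (hdim : upperAssouadDim n (frontier D) < n - δ * p ∨
      ((n : ℝ) - δ * p < lowerAssouadDim n (frontier D) ∧
        ¬ Bornology.IsBounded (frontier D))) :
    ∃ C : ℝ, 0 < C ∧ HasFracHardy n δ p q C D := by
  have hδp : δ * p < n := by rwa [lt_div_iff₀' hδ] at hpn
  have hn : 0 < (n : ℝ) := (by positivity : 0 < δ * p).trans hδp
  obtain ⟨C₀, hC₀, hHardy⟩ : ∃ C : ℝ, 0 < C ∧ HasFracHardy n δ p p C D :=
    hdim.elim (exists_hasFracHardy_of_upperAssouadDim_lt hO hF hκ hD hδ.le hp) fun h =>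
      exists_hasFracHardy_of_lt_lowerAssouadDim hO h.2 hκ hD hδ.le hp hδp.le h.1
  have hP : 0 < 1 / p - δ / n := by
    rw [sub_pos, div_lt_div_iff₀ hn hp]
    linarith
  obtain ⟨C₁, hC₁, hSobolev⟩ := hHardy.exists_sobolev_endpoint (P := (1 / p - δ / n)⁻¹)
    (by exact_mod_cast hn.ne') hO hF hδ.le hp (inv_pos.2 hP) (by simp) hC₀
  have hqP : q ∈ Icc p (1 / p - δ / n)⁻¹ :=
    ⟨(one_div_le_one_div hq hp).1 (by linarith),
      (le_inv_comm₀ hq hP).2 (by linarith [one_div q])⟩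
  rw [← segment_eq_Icc (hqP.1.trans hqP.2)] at hqP
  obtain ⟨τ, σ, hτ, hσ, hτσ, rfl⟩ := hqP
  exact ⟨_, by positivity, hHardy.interpolate hO hF hp hp (inv_pos.2 hP) hC₀ hC₁ hτ hσ hτσ hSobolev⟩

/-- Sufficient geometric conditions for fractional Hardy inequalities:
let `D ⊊ ℝⁿ` be an unbounded `c`-John domain, `n ≥ 2`, `0 < δ < 1`, `1 ≤ p, q < ∞` with
`p < n/δ` and `0 ≤ 1/p - 1/q ≤ δ/n`. If either (A) the upper Assouad dimension of `∂D`
is `< n - δp`, or (B) the lower Assouad dimension of `∂D` is `> n - δp` and `∂D` is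
unbounded, then the fractional `(δ,q,p)`-Hardy inequality holds in `D`. -/
theorem statement14 (n : ℕ) (hn : 2 ≤ n) (c : ℝ) (hc : 1 ≤ c) (D : Set (Eucl n))
    (hD : IsJohnDomain n c D) (hDu : ¬ Bornology.IsBounded D) (hDproper : D ≠ univ)
    (δ p q : ℝ) (hδ : δ ∈ Ioo (0:ℝ) 1) (hp : 1 ≤ p) (hq : 1 ≤ q)
    (hpn : p < n / δ) (h1 : 0 ≤ 1 / p - 1 / q) (h2 : 1 / p - 1 / q ≤ δ / n)
    (hdim : upperAssouadDim n (frontier D) < n - δ * p ∨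
      ((n : ℝ) - δ * p < lowerAssouadDim n (frontier D) ∧
        ¬ Bornology.IsBounded (frontier D))) :
    ∃ C : ℝ, 0 < C ∧ HasFracHardy n δ p q C D :=
  statement14_general (by positivity) hD.1
    (nonempty_frontier_iff.2 ⟨hD.2.1.nonempty, hDproper⟩) (hD.hasCorkscrews hc hDu) hδ.1
    (by linarith) (by linarith) hpn h1 h2 hdim
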